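/- For q, s ∈ ℍ let k_q(p) = Σ_{n=0}^∞ pⁿ q̄ⁿ / n! and k_s(p) = Σ_{n=0}^∞ pⁿ s̄ⁿ / n!. Then for every imaginary unit I ∈ 𝕊, ⟨k_q, k_s⟩_I = Σ_{n=0}^∞ sⁿ q̄ⁿ / n! = e_⋆^{s q̄}. -/

import Mathlib

open MeasureTheory Real Nat

noncomputable section

local notation "ℍ" => Quaternion ℝ

/-- The sphere of quaternionic imaginary units. -/
def quatSphere : Set ℍ := {q | q.re = 0 ∧ ‖q‖ = 1}

/-- The point `x + y I` of the slice `ℂ_I`. -/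
def sliceVal (I : ℍ) (z : ℝ × ℝ) : ℍ := ((z.1 : ℍ)) + ((z.2 : ℍ)) * I

/-- The Fock inner product `⟨f, g⟩_I = (1/π) ∫ e^{-(x²+y²)} conj(g(x+yI)) f(x+yI) dx dy`. -/
def fockInner (I : ℍ) (f g : ℍ → ℍ) : ℍ :=
  π⁻¹ • ∫ z : ℝ × ℝ,
    Real.exp (-(z.1 ^ 2 + z.2 ^ 2)) • (star (g (sliceVal I z)) * f (sliceVal I z))

/-- The reproducing kernel `k_q(p) = e_⋆^{p q̄} = Σ pⁿ q̄ⁿ / n!`. -/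
def fockKernel (q : ℍ) : ℍ → ℍ := fun p => ∑' n : ℕ, ((n ! : ℝ)⁻¹) • (p ^ n * (star q) ^ n)

lemma aux_I_sq {I : ℍ} (hI : I ∈ quatSphere) : I * I = -1 := by
  obtain ⟨h0, h1⟩ := hI
  have hs : star I = -I := by
    rw [Quaternion.star_eq_neg]; exact h0
  have h2 : I * star I = 1 := by
    rw [Quaternion.self_mul_star, Quaternion.normSq_eq_norm_mul_self, h1]; simp
  rw [hs, mul_neg] at h2
  rw [← h2, neg_neg]

lemma aux_star {I : ℍ} (hI : I ∈ quatSphere) : star I = -I := by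
  rw [Quaternion.star_eq_neg]; exact hI.1

def auxPhi (I : ℍ) (hI : I ∈ quatSphere) : ℂ →ₐ[ℝ] ℍ := Complex.liftAux I (aux_I_sq hI)

lemma auxPhi_apply (I : ℍ) (hI : I ∈ quatSphere) (z : ℝ × ℝ) :
    auxPhi I hI (⟨z.1, z.2⟩ : ℂ) = sliceVal I z := by
  simp only [auxPhi, Complex.liftAux_apply, sliceVal]
  rw [← Quaternion.coe_mul_eq_smul]; rfl

lemma auxPhi_star (I : ℍ) (hI : I ∈ quatSphere) (z : ℝ × ℝ) :
    auxPhi I hI (star (⟨z.1, z.2⟩ : ℂ)) = star (sliceVal I z) := by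
  have : star (⟨z.1, z.2⟩ : ℂ) = ⟨z.1, -z.2⟩ := rfl
  rw [this, auxPhi_apply I hI (z.1, -z.2)]
  simp only [sliceVal, star_add, star_mul, aux_star hI, Quaternion.star_coe]
  rw [neg_mul, ← Quaternion.coe_commutes]
  simp

lemma aux_norm (I : ℍ) (hI : I ∈ quatSphere) (z : ℝ × ℝ) :
    ‖sliceVal I z‖ ^ 2 = z.1 ^ 2 + z.2 ^ 2 := by
  have h : ((‖sliceVal I z‖ ^ 2 : ℝ) : ℍ) = ((z.1 ^ 2 + z.2 ^ 2 : ℝ) : ℍ) := by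
    rw [pow_two, ← Quaternion.normSq_eq_norm_mul_self, ← Quaternion.self_mul_star,
      ← auxPhi_star I hI, ← auxPhi_apply I hI, ← map_mul]
    have : (⟨z.1, z.2⟩ : ℂ) * star (⟨z.1, z.2⟩ : ℂ) = algebraMap ℝ ℂ (z.1 ^ 2 + z.2 ^ 2) := by
      apply Complex.ext <;> simp [pow_two] <;> ring
    rw [this, AlgHom.commutes]; rfl
  exact Quaternion.coe_injective h

lemma aux_cont (I : ℍ) : Continuous (sliceVal I) := by
  unfold sliceVal
  have := Quaternion.continuous_coe
  fun_prop

lemma aux_gauss : Integrable (fun z : ℝ × ℝ => Real.exp (-(1/2) * (z.1 ^ 2 + z.2 ^ 2))) := by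
  have h := integrable_exp_neg_mul_sq (b := 1/2) (by norm_num)
  refine (h.mul_prod h).congr (Filter.Eventually.of_forall fun z => ?_)
  simp only
  rw [← Real.exp_add]; ring_nf

lemma aux_moment (I : ℍ) (hI : I ∈ quatSphere) (c : ℝ) :
    Integrable (fun z : ℝ × ℝ => Real.exp (-(z.1 ^ 2 + z.2 ^ 2)) * Real.exp (c * ‖sliceVal I z‖)) := by
  refine (aux_gauss.const_mul (Real.exp (c ^ 2 / 2))).mono' ?_ ?_
  · have := aux_cont I
    exact Continuous.aestronglyMeasurable (by fun_prop)
  · refine Filter.Eventually.of_forall fun z => ?_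
    rw [← Real.exp_add, ← Real.exp_add, Real.norm_eq_abs, Real.abs_exp, Real.exp_le_exp,
      ← aux_norm I hI z]
    nlinarith [sq_nonneg (c - ‖sliceVal I z‖)]

lemma aux_theta (m n : ℕ) :
    ∫ θ in Set.Ioo (-π) π, Complex.exp (((n : ℂ) - m) * Complex.I * θ) =
      if m = n then (2 * π : ℂ) else 0 := by
  rw [← integral_Ioc_eq_integral_Ioo, ← intervalIntegral.integral_of_le (by linarith [Real.pi_pos])]
  split_ifs with h
  · subst h; simp; ring
  · have hc : ((n : ℂ) - m) * Complex.I ≠ 0 := by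
      refine mul_ne_zero (sub_ne_zero.2 ?_) Complex.I_ne_zero
      exact fun h' => h (Nat.cast_injective h').symm
    rw [integral_exp_mul_complex hc, div_eq_zero_iff]
    left
    rw [sub_eq_zero, Complex.exp_eq_exp_iff_exists_int]
    refine ⟨(n : ℤ) - m, ?_⟩
    push_cast; ring

lemma aux_r (n : ℕ) : ∫ r in Set.Ioi (0:ℝ), r ^ (2 * n + 1) * Real.exp (-r ^ 2) = (n ! : ℝ) / 2 := by
  have h := integral_rpow_mul_exp_neg_rpow (p := 2) (q := 2 * n + 1) (by norm_num)
    (by have : (0:ℝ) ≤ n := by positivity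
        linarith)
  rw [show ((2 * (n:ℝ) + 1 + 1) / 2) = n + 1 by ring, Real.Gamma_nat_eq_factorial] at h
  rw [show (n ! : ℝ) / 2 = 1 / 2 * (n ! : ℝ) by ring, ← h]
  refine setIntegral_congr_fun measurableSet_Ioi fun r hr => ?_
  norm_cast

lemma aux_complex (m n : ℕ) :
    ∫ z : ℝ × ℝ, Real.exp (-(z.1 ^ 2 + z.2 ^ 2)) •
      ((star (⟨z.1, z.2⟩ : ℂ)) ^ m * (⟨z.1, z.2⟩ : ℂ) ^ n) =
      if m = n then ((π * n ! : ℝ) : ℂ) else 0 := by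
  rw [← integral_comp_polarCoord_symm]
  have h : ∀ p ∈ polarCoord.target, p.1 • (Real.exp (-((polarCoord.symm p).1 ^ 2 + (polarCoord.symm p).2 ^ 2)) •
      ((star (⟨(polarCoord.symm p).1, (polarCoord.symm p).2⟩ : ℂ)) ^ m *
        (⟨(polarCoord.symm p).1, (polarCoord.symm p).2⟩ : ℂ) ^ n)) =
      ((p.1 ^ (m + n + 1) * Real.exp (-p.1 ^ 2) : ℝ) : ℂ) *
        Complex.exp (((n : ℂ) - m) * Complex.I * p.2) := by
    rintro ⟨r, θ⟩ -
    simp only [polarCoord_symm_apply]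
    have e1 : (⟨r * Real.cos θ, r * Real.sin θ⟩ : ℂ) = r * Complex.exp (θ * Complex.I) := by
      rw [Complex.exp_mul_I, ← Complex.ofReal_cos, ← Complex.ofReal_sin]
      apply Complex.ext <;> simp [-Complex.ofReal_cos, -Complex.ofReal_sin]
    have e2 : star (⟨r * Real.cos θ, r * Real.sin θ⟩ : ℂ) = r * Complex.exp (-(θ * Complex.I)) := by
      rw [e1, ← neg_mul, ← Complex.ofReal_neg, Complex.exp_mul_I, Complex.exp_mul_I, ← Complex.ofReal_cos, ← Complex.ofReal_sin, ← Complex.ofReal_cos, ← Complex.ofReal_sin]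
      apply Complex.ext <;> simp [-Complex.ofReal_cos, -Complex.ofReal_sin]
    have e3 : (r * Real.cos θ) ^ 2 + (r * Real.sin θ) ^ 2 = r ^ 2 := by
      have := Real.sin_sq_add_cos_sq θ
      linear_combination r ^ 2 * this
    rw [e2, e1, e3, mul_pow, mul_pow, ← Complex.exp_nat_mul, ← Complex.exp_nat_mul]
    rw [show ((n : ℂ) - m) * Complex.I * θ = m * (-(θ * Complex.I)) + n * (θ * Complex.I) by ring,
      Complex.exp_add]
    simp only [Complex.real_smul]
    push_cast
    ring
  rw [setIntegral_congr_fun polarCoord.open_target.measurableSet h, polarCoord_target,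
    Measure.volume_eq_prod,
    setIntegral_prod_mul (fun r : ℝ => ((r ^ (m + n + 1) * Real.exp (-r ^ 2) : ℝ) : ℂ))
      (fun θ : ℝ => Complex.exp (((n : ℂ) - m) * Complex.I * θ)), aux_theta]
  split_ifs with hmn
  · subst hmn
    rw [integral_complex_ofReal, ← two_mul, aux_r]
    push_cast; ring
  · simp

lemma aux_pow_int (I : ℍ) (hI : I ∈ quatSphere) (m n : ℕ) :
    ∫ z : ℝ × ℝ, Real.exp (-(z.1 ^ 2 + z.2 ^ 2)) •
      ((star (sliceVal I z)) ^ m * (sliceVal I z) ^ n) =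
      if m = n then ((π * n ! : ℝ) : ℍ) else 0 := by
  have hint : Integrable (fun z : ℝ × ℝ => Real.exp (-(z.1 ^ 2 + z.2 ^ 2)) •
      ((star (⟨z.1, z.2⟩ : ℂ)) ^ m * (⟨z.1, z.2⟩ : ℂ) ^ n)) := by
    refine ((aux_moment I hI 1).const_mul ((m + n)! : ℝ)).mono' ?_ ?_
    · have : Continuous (fun z : ℝ × ℝ => (⟨z.1, z.2⟩ : ℂ)) :=
        Complex.equivRealProdCLM.symm.continuous
      exact Continuous.aestronglyMeasurable (by fun_prop)
    · refine Filter.Eventually.of_forall fun z => ?_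
      have hn : ‖(⟨z.1, z.2⟩ : ℂ)‖ = ‖sliceVal I z‖ := by
        rw [← sq_eq_sq₀ (norm_nonneg _) (norm_nonneg _), aux_norm I hI, Complex.sq_norm,
          Complex.normSq_mk]; ring
      rw [norm_smul, norm_mul, norm_pow, norm_pow, norm_star, hn, Real.norm_eq_abs, Real.abs_exp,
        ← pow_add, one_mul]
      have := Real.pow_div_factorial_le_exp _ (norm_nonneg (sliceVal I z)) (m + n)
      rw [div_le_iff₀ (by positivity)] at this
      calc _ ≤ Real.exp (-(z.1 ^ 2 + z.2 ^ 2)) * (Real.exp ‖sliceVal I z‖ * ((m + n)! : ℝ)) := by gcongr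
        _ = _ := by ring
  have := (LinearMap.toContinuousLinearMap (auxPhi I hI).toLinearMap).integral_comp_comm hint
  rw [aux_complex] at this
  simp only [LinearMap.coe_toContinuousLinearMap', AlgHom.toLinearMap_apply, map_smul, map_mul,
    map_pow, auxPhi_star, auxPhi_apply] at this
  rw [this]
  split_ifs
  · exact (auxPhi I hI).commutes _
  · simp

lemma aux_bound (a b : ℝ) : HasSum (fun k : ℕ × ℕ => ((k.1 ! : ℝ)⁻¹ * a ^ k.1) * ((k.2 ! : ℝ)⁻¹ * b ^ k.2))
    (Real.exp (a + b)) := by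
  have h : ∀ c : ℝ, Summable fun n : ℕ => ‖(n ! : ℝ)⁻¹ * c ^ n‖ := fun c => by
    refine (Real.summable_pow_div_factorial c).norm.congr fun n => ?_
    rw [div_eq_inv_mul]
  have e : ∀ c : ℝ, ∑' n : ℕ, (n ! : ℝ)⁻¹ * c ^ n = Real.exp c := fun c => by
    rw [Real.exp_eq_exp_ℝ, NormedSpace.exp_eq_tsum_div]
    simp only [div_eq_inv_mul]
  have h2 := (summable_mul_of_summable_norm (h a) (h b)).hasSum
  rwa [← tsum_mul_tsum_of_summable_norm (h a) (h b), e, e, ← Real.exp_add] at h2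

lemma aux_term_norm (q p : ℍ) (n : ℕ) :
    ‖((n ! : ℝ)⁻¹) • (p ^ n * (star q) ^ n)‖ = (n ! : ℝ)⁻¹ * (‖q‖ * ‖p‖) ^ n := by
  rw [norm_smul, norm_mul, norm_pow, norm_pow, norm_star, mul_pow, norm_inv, Real.norm_natCast]
  ring

lemma aux_summ (q p : ℍ) : Summable fun n : ℕ => ‖((n ! : ℝ)⁻¹) • (p ^ n * (star q) ^ n)‖ := by
  refine (Real.summable_pow_div_factorial (‖q‖ * ‖p‖)).congr fun n => ?_
  rw [aux_term_norm, div_eq_inv_mul]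

theorem fockInner_kernel_kernel (q s : ℍ) (I : ℍ) (hI : I ∈ quatSphere) :
    fockInner I (fockKernel q) (fockKernel s) =
      ∑' n : ℕ, ((n ! : ℝ)⁻¹) • (s ^ n * (star q) ^ n) := by
  have key := hasSum_integral_of_dominated_convergence (μ := (volume : Measure (ℝ × ℝ)))
    (F := fun (k : ℕ × ℕ) (z : ℝ × ℝ) => Real.exp (-(z.1 ^ 2 + z.2 ^ 2)) •
      (star (((k.1 ! : ℝ)⁻¹) • ((sliceVal I z) ^ k.1 * (star s) ^ k.1)) *
        (((k.2 ! : ℝ)⁻¹) • ((sliceVal I z) ^ k.2 * (star q) ^ k.2))))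
    (f := fun z => Real.exp (-(z.1 ^ 2 + z.2 ^ 2)) •
      (star (fockKernel s (sliceVal I z)) * fockKernel q (sliceVal I z)))
    (fun k z => Real.exp (-(z.1 ^ 2 + z.2 ^ 2)) *
      (((k.1 ! : ℝ)⁻¹ * (‖s‖ * ‖sliceVal I z‖) ^ k.1) *
        ((k.2 ! : ℝ)⁻¹ * (‖q‖ * ‖sliceVal I z‖) ^ k.2)))
    ?_ ?_ ?_ ?_ ?_
  · unfold fockInner
    rw [← key.tsum_eq, ← tsum_const_smul'']
    have hterm : ∀ k : ℕ × ℕ, π⁻¹ • ∫ z : ℝ × ℝ, Real.exp (-(z.1 ^ 2 + z.2 ^ 2)) •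
      (star (((k.1 ! : ℝ)⁻¹) • ((sliceVal I z) ^ k.1 * (star s) ^ k.1)) *
        (((k.2 ! : ℝ)⁻¹) • ((sliceVal I z) ^ k.2 * (star q) ^ k.2))) =
        if k.1 = k.2 then ((k.2 ! : ℝ)⁻¹) • (s ^ k.2 * (star q) ^ k.2) else 0 := by
      rintro ⟨m, n⟩
      have h1 : ∀ z : ℝ × ℝ, Real.exp (-(z.1 ^ 2 + z.2 ^ 2)) •
          (star (((m ! : ℝ)⁻¹) • ((sliceVal I z) ^ m * (star s) ^ m)) *
          (((n ! : ℝ)⁻¹) • ((sliceVal I z) ^ n * (star q) ^ n))) =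
          ((m ! : ℝ)⁻¹ * (n ! : ℝ)⁻¹) • (s ^ m * (Real.exp (-(z.1 ^ 2 + z.2 ^ 2)) •
            ((star (sliceVal I z)) ^ m * (sliceVal I z) ^ n)) * (star q) ^ n) := by
        intro z
        simp only [Quaternion.star_smul, star_mul, star_pow, star_star, star_trivial, smul_mul_assoc,
          mul_smul_comm, mul_assoc, smul_smul]
        congr 1
        ring
      simp only [h1]
      have h2 : ∀ f : ℝ × ℝ → ℍ, ∫ z, s ^ m * f z * (star q) ^ n =
          s ^ m * (∫ z, f z) * (star q) ^ n := by
        intro f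
        by_cases hs : s ^ m = 0
        · simp [hs]
        by_cases hq : (star q) ^ n = 0
        · simp [hq]
        by_cases hf : Integrable f
        · rw [integral_mul_const_of_integrable (hf.const_mul _),
            integral_const_mul_of_integrable hf]
        · rw [integral_undef hf, integral_undef]
          · simp
          · intro h
            apply hf
            have h3 := (h.mul_const ((star q) ^ n)⁻¹).const_mul (s ^ m)⁻¹
            refine h3.congr (Filter.Eventually.of_forall fun z => ?_)
            simp only
            rw [mul_inv_cancel_right₀ hq, inv_mul_cancel_left₀ hs]
      rw [integral_smul, h2, aux_pow_int I hI]
      split_ifs with h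
      · subst h
        rw [← Quaternion.coe_commutes, mul_assoc, Quaternion.coe_mul_eq_smul, smul_smul, smul_smul]
        congr 1
        have : (m ! : ℝ) ≠ 0 := by positivity
        field_simp
      · simp
    simp only [hterm]
    have hinj : Function.Injective (fun n : ℕ => (n, n)) := fun a b h => (Prod.ext_iff.1 h).1
    rw [← hinj.tsum_eq]
    · simp
    · rintro ⟨m, n⟩ h
      by_cases hmn : m = n
      · exact ⟨m, by rw [hmn]⟩
      · simp [hmn] at h
  · intro k
    have := aux_cont I
    exact Continuous.aestronglyMeasurable (by fun_prop)
  · intro k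
    refine Filter.Eventually.of_forall fun z => ?_
    rw [norm_smul, norm_mul, norm_star, aux_term_norm, aux_term_norm, Real.norm_eq_abs,
      Real.abs_exp]
  · refine Filter.Eventually.of_forall fun z => ?_
    exact ((aux_bound _ _).mul_left _).summable
  · refine (aux_moment I hI (‖s‖ + ‖q‖)).congr (Filter.Eventually.of_forall fun z => ?_)
    simp only
    rw [((aux_bound _ _).mul_left _).tsum_eq, add_mul]
  · refine Filter.Eventually.of_forall fun z => ?_
    apply HasSum.const_smul
    have hs : Summable fun n : ℕ => ‖star (((n ! : ℝ)⁻¹) • ((sliceVal I z) ^ n * (star s) ^ n))‖ := by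
      simpa only [norm_star] using aux_summ s (sliceVal I z)
    have hq := aux_summ q (sliceVal I z)
    have h2 := (summable_mul_of_summable_norm hs hq).hasSum
    rw [← tsum_mul_tsum_of_summable_norm hs hq, ← tsum_star] at h2
    exact h2
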